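/- Let a_0, …, a_11 ∈ ℂ and let F = a_0x_0x_1^2 + a_1x_0x_1x_2 + a_2x_0x_1x_3 + a_3x_0x_2^2 + a_4x_0x_2x_3 + a_5x_1^3 + a_6x_1^2x_2 + a_7x_1x_2^2 + a_8x_1x_2x_3 + a_9x_1^2x_3 + a_10x_2^3 + a_11x_2^2x_3 be a cubic form in binodal normal form. Then every 19×19 minor of the Nanson matrix M(F) of the four partial derivatives of F vanishes; equivalently, M(F) has rank at most 18. In other words, the binodal normal form family N_2^{nf} is contained in V_2. -/

import Mathlib

/-!
Euler's relation for four forms `Qᵢ` of degree `d` says that the Jacobian matrix maps the vector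
`x` to `d · Q`; multiplying by the adjugate gives `J xₖ = d ∑ᵢ adj(k,i) Qᵢ`. At a common zero `p`
with `pₖ ≠ 0` this yields `J(p) = 0`, and differentiating it yields
`∂ⱼJ(p) pₖ = d ∑ᵢ adj(k,i)(p) ∂ⱼQᵢ(p) = d J(p) δₖⱼ = 0`. So all twenty of Nanson's cubics vanish at
every common zero of four quadrics.

The value of a cubic form at the coordinate point `eₖ` is its coefficient of `xₖ³`. Each coordinate
point which is a common zero of the quadrics therefore makes one column of the Nanson matrix vanish.
The partial derivatives of a cubic in binodal normal form vanish at `e₀` and `e₃`, which leaves only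
eighteen columns.
-/

open MvPolynomial

/-- The exponent vectors of the 20 degree-3 monomials in `x₀, x₁, x₂, x₃`, in a fixed order. -/
noncomputable def cubicExp : Fin 20 → (Fin 4 →₀ ℕ) := fun m =>
  Finsupp.equivFunOnFinite.symm
    (![![3,0,0,0], ![2,1,0,0], ![2,0,1,0], ![2,0,0,1],
       ![1,2,0,0], ![1,1,1,0], ![1,1,0,1], ![1,0,2,0], ![1,0,1,1], ![1,0,0,2],
       ![0,3,0,0], ![0,2,1,0], ![0,2,0,1], ![0,1,2,0], ![0,1,1,1], ![0,1,0,2],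
       ![0,0,3,0], ![0,0,2,1], ![0,0,1,2], ![0,0,0,3]] m)

/-- The twenty cubic forms of Nanson's construction: the sixteen products `xⱼ · Qᵢ`
and the four partial derivatives of the Jacobian determinant of `Q₁, …, Q₄`. -/
noncomputable def nansonRow {K : Type*} [CommRing K]
    (Q : Fin 4 → MvPolynomial (Fin 4) K) : Fin 20 → MvPolynomial (Fin 4) K := fun r =>
  if h : (r : ℕ) < 16 then
    X (⟨(r : ℕ) % 4, by omega⟩ : Fin 4) * Q ⟨(r : ℕ) / 4, by omega⟩
  else
    pderiv (⟨(r : ℕ) - 16, by omega⟩ : Fin 4)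
      (Matrix.det (Matrix.of fun i j : Fin 4 => pderiv j (Q i)))

/-- Nanson's 20 × 20 matrix of four quaternary quadrics: the coefficient matrix of the
twenty cubics `nansonRow Q` with respect to the twenty degree-3 monomials. -/
noncomputable def nansonMatrix {K : Type*} [CommRing K]
    (Q : Fin 4 → MvPolynomial (Fin 4) K) : Matrix (Fin 20) (Fin 20) K :=
  Matrix.of fun r c => coeff (cubicExp c) (nansonRow Q r)

section ZeroColumns

variable {R m n : Type*} [Fintype n] [DecidableEq n]

theorem rank_le_card_compl_of_columns_eq_zero [CommSemiring R] [StrongRankCondition R]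
    {A : Matrix m n R} {Z : Finset n} (hA : ∀ i, ∀ j ∈ Z, A i j = 0) : A.rank ≤ Zᶜ.card := by
  let e : {j // j ∈ Zᶜ} → n := Subtype.val
  have factorization : A = A.submatrix id e * (1 : Matrix n n R).submatrix e id := by
    ext i j
    have hsum : (A.submatrix id e * (1 : Matrix n n R).submatrix e id) i j =
        ∑ l ∈ Zᶜ, A i l * (1 : Matrix n n R) l j :=
      Finset.sum_coe_sort Zᶜ fun l => A i l * (1 : Matrix n n R) l j
    rw [hsum]
    simpa [Matrix.one_apply] using hA i j
  calc A.rank ≤ (A.submatrix id e).rank := by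
        conv_lhs => rw [factorization]
        exact Matrix.rank_mul_le_left _ _
    _ ≤ Zᶜ.card := (Matrix.rank_le_card_width _).trans_eq (Fintype.card_coe _)

theorem det_submatrix_eq_zero_of_columns_eq_zero [CommRing R] {ι : Type*} [Fintype ι]
    [DecidableEq ι] {A : Matrix m n R} {Z : Finset n} (hA : ∀ i, ∀ j ∈ Z, A i j = 0)
    (hZ : Zᶜ.card < Fintype.card ι) (r : ι → m) (c : ι → n) : (A.submatrix r c).det = 0 := by
  by_cases hc : ∃ l, c l ∈ Z
  · obtain ⟨l, hl⟩ := hc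
    exact Matrix.det_eq_zero_of_column_eq_zero l fun i => hA (r i) (c l) hl
  · push Not at hc
    obtain ⟨l, -, l', -, hne, heq⟩ := Finset.exists_ne_map_eq_of_card_lt_of_maps_to
      (s := Finset.univ) hZ fun l _ => Finset.mem_coe.mpr (Finset.mem_compl.mpr (hc l))
    exact Matrix.det_zero_of_column_eq hne fun i => congrArg (A (r i)) heq

end ZeroColumns

section Homogeneous

variable {R σ : Type*}

theorem isHomogeneous_det [CommRing R] {n : Type*} [Fintype n] [DecidableEq n]
    {M : Matrix n n (MvPolynomial σ R)} {d : ℕ} (hM : ∀ i j, (M i j).IsHomogeneous d) :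
    M.det.IsHomogeneous (Fintype.card n * d) := by
  rw [Matrix.det_apply]
  refine IsHomogeneous.sum _ _ _ fun π _ => ?_
  have hprod : (∏ i, M (π i) i).IsHomogeneous (Fintype.card n * d) := by
    simpa using IsHomogeneous.prod Finset.univ (fun i => M (π i) i) (fun _ => d)
      fun i _ => hM (π i) i
  rcases Int.units_eq_one_or (Equiv.Perm.sign π) with hπ | hπ
  · simpa [hπ] using hprod
  · simpa [hπ] using hprod.neg

theorem eval_single_one_of_isHomogeneous [CommSemiring R] [DecidableEq σ]
    {f : MvPolynomial σ R} {n : ℕ} (hf : f.IsHomogeneous n) (k : σ) :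
    eval (Pi.single k 1) f = coeff (Finsupp.single k n) f := by
  rw [eval_eq, Finset.sum_eq_single (Finsupp.single k n)]
  · rw [Finset.prod_eq_one, mul_one]
    intro i hi
    obtain rfl : i = k := by simpa using Finsupp.support_single_subset hi
    simp
  · intro m hm hmk
    obtain ⟨i, him, hik⟩ : ∃ i ∈ m.support, i ≠ k := by
      by_contra! h
      have hm_single : m = Finsupp.single k (m k) :=
        Finsupp.support_subset_singleton.mp fun i hi => Finset.mem_singleton.mpr (h i hi)
      have hdeg : m.degree = n := by
        by_contra hne
        exact mem_support_iff.mp hm (hf.coeff_eq_zero hne)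
      rw [hm_single, Finsupp.degree_single] at hdeg
      exact hmk (hdeg ▸ hm_single)
    rw [Finset.prod_eq_zero him, mul_zero]
    rw [Pi.single_eq_of_ne hik, zero_pow (Finsupp.mem_support_iff.mp him)]
  · intro h
    rw [notMem_support_iff.mp h, zero_mul]

end Homogeneous

section Jacobian

variable {R σ : Type*}

/-- The Jacobian matrix `(∂Qᵢ/∂xⱼ)` of a family of polynomials, whose determinant enters Nanson's
construction. -/
noncomputable def jacobianMatrix [CommSemiring R] {ι : Type*} (Q : ι → MvPolynomial σ R) :
    Matrix ι σ (MvPolynomial σ R) :=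
  Matrix.of fun i j => pderiv j (Q i)

variable [Fintype σ]

theorem jacobianMatrix_mulVec_X [CommSemiring R] {ι : Type*} {Q : ι → MvPolynomial σ R} {d : ℕ}
    (hQ : ∀ i, (Q i).IsHomogeneous d) : (jacobianMatrix Q).mulVec X = d • Q := by
  ext1 i
  simp_rw [Pi.smul_apply, ← (hQ i).sum_X_mul_pderiv, mul_comm (X _)]
  rfl

variable [CommRing R] [DecidableEq σ] {Q : σ → MvPolynomial σ R} {d : ℕ}

theorem det_jacobianMatrix_mul_X (hQ : ∀ i, (Q i).IsHomogeneous d) (k : σ) :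
    (jacobianMatrix Q).det * X k = d • ∑ i, (jacobianMatrix Q).adjugate k i * Q i := by
  have h : (jacobianMatrix Q).adjugate.mulVec (d • Q) = (jacobianMatrix Q).det • X := by
    rw [← jacobianMatrix_mulVec_X hQ, Matrix.mulVec_mulVec, Matrix.adjugate_mul,
      Matrix.smul_mulVec, Matrix.one_mulVec]
  rw [Matrix.mulVec_smul] at h
  exact (congrFun h k).symm

theorem sum_adjugate_jacobianMatrix_mul_pderiv (Q : σ → MvPolynomial σ R) (k j : σ) :
    ∑ i, (jacobianMatrix Q).adjugate k i * pderiv j (Q i) =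
      (jacobianMatrix Q).det * (1 : Matrix σ σ (MvPolynomial σ R)) k j :=
  congrFun (congrFun (Matrix.adjugate_mul (jacobianMatrix Q)) k) j

variable {p : σ → R} {k : σ}

theorem eval_det_jacobianMatrix_eq_zero (hQ : ∀ i, (Q i).IsHomogeneous d)
    (hk : p k ∈ nonZeroDivisors R) (hp : ∀ i, eval p (Q i) = 0) :
    eval p (jacobianMatrix Q).det = 0 := by
  rw [← mul_right_mem_nonZeroDivisors_eq_zero_iff hk]
  simpa [hp] using congrArg (eval p) (det_jacobianMatrix_mul_X hQ k)

theorem eval_pderiv_det_jacobianMatrix_eq_zero (hQ : ∀ i, (Q i).IsHomogeneous d)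
    (hk : p k ∈ nonZeroDivisors R) (hp : ∀ i, eval p (Q i) = 0) (j : σ) :
    eval p (pderiv j (jacobianMatrix Q).det) = 0 := by
  have hdet := eval_det_jacobianMatrix_eq_zero hQ hk hp
  have hadj : ∑ i, eval p ((jacobianMatrix Q).adjugate k i) * eval p (pderiv j (Q i)) = 0 := by
    simpa [hdet] using congrArg (eval p) (sum_adjugate_jacobianMatrix_mul_pderiv Q k j)
  have hderiv : eval p (pderiv j (jacobianMatrix Q).det) * p k =
      d • ∑ i, eval p ((jacobianMatrix Q).adjugate k i) * eval p (pderiv j (Q i)) := by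
    simpa [Derivation.leibniz, hp, hdet, mul_comm (p k)] using
      congrArg (fun f => eval p (pderiv j f)) (det_jacobianMatrix_mul_X hQ k)
  rw [← mul_right_mem_nonZeroDivisors_eq_zero_iff hk, hderiv, hadj, smul_zero]

end Jacobian

section Nanson

variable {K : Type*} [CommRing K] {Q : Fin 4 → MvPolynomial (Fin 4) K}

theorem isHomogeneous_nansonRow (hQ : ∀ i, (Q i).IsHomogeneous 2) (r : Fin 20) :
    (nansonRow Q r).IsHomogeneous 3 := by
  unfold nansonRow
  split_ifs
  · exact (isHomogeneous_X _ _).mul (hQ _)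
  · exact (isHomogeneous_det fun i j => (hQ i).pderiv).pderiv

theorem eval_nansonRow_eq_zero {d : ℕ} (hQ : ∀ i, (Q i).IsHomogeneous d) {p : Fin 4 → K}
    {k : Fin 4} (hk : p k ∈ nonZeroDivisors K) (hp : ∀ i, eval p (Q i) = 0) (r : Fin 20) :
    eval p (nansonRow Q r) = 0 := by
  unfold nansonRow
  split_ifs
  · rw [map_mul, hp, mul_zero]
  · exact eval_pderiv_det_jacobianMatrix_eq_zero hQ hk hp _

/-- The position of `xₖ³` in the list `cubicExp` of cubic monomials. -/
def cubeIndex : Fin 4 ↪ Fin 20 where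
  toFun := ![0, 10, 16, 19]
  inj' := by decide

theorem cubicExp_cubeIndex (k : Fin 4) : cubicExp (cubeIndex k) = Finsupp.single k 3 := by
  ext i
  fin_cases k <;> fin_cases i <;> simp [cubicExp, cubeIndex]

theorem nansonMatrix_cubeIndex_eq_zero (hQ : ∀ i, (Q i).IsHomogeneous 2) {k : Fin 4}
    (hk : ∀ i, eval (Pi.single k 1) (Q i) = 0) (r : Fin 20) :
    nansonMatrix Q r (cubeIndex k) = 0 := by
  have hunit : (Pi.single k 1 : Fin 4 → K) k ∈ nonZeroDivisors K := by simp
  calc nansonMatrix Q r (cubeIndex k) = coeff (Finsupp.single k 3) (nansonRow Q r) := by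
        rw [nansonMatrix, Matrix.of_apply, cubicExp_cubeIndex]
    _ = eval (Pi.single k 1) (nansonRow Q r) :=
        (eval_single_one_of_isHomogeneous (isHomogeneous_nansonRow hQ r) k).symm
    _ = 0 := eval_nansonRow_eq_zero hQ hunit hk r

variable {S : Finset (Fin 4)}

theorem nansonMatrix_eq_zero_of_mem_map_cubeIndex (hQ : ∀ i, (Q i).IsHomogeneous 2)
    (hS : ∀ k ∈ S, ∀ i, eval (Pi.single k 1) (Q i) = 0) (r : Fin 20) :
    ∀ c ∈ S.map cubeIndex, nansonMatrix Q r c = 0 := by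
  simpa using fun k hk => nansonMatrix_cubeIndex_eq_zero hQ (hS k hk) r

theorem card_compl_map_cubeIndex (S : Finset (Fin 4)) :
    (S.map cubeIndex)ᶜ.card = 20 - S.card := by
  rw [Finset.card_compl, Finset.card_map, Fintype.card_fin]

theorem rank_nansonMatrix_le [Nontrivial K] (hQ : ∀ i, (Q i).IsHomogeneous 2)
    (hS : ∀ k ∈ S, ∀ i, eval (Pi.single k 1) (Q i) = 0) :
    (nansonMatrix Q).rank ≤ 20 - S.card :=
  (rank_le_card_compl_of_columns_eq_zero
    (nansonMatrix_eq_zero_of_mem_map_cubeIndex hQ hS)).trans_eq (card_compl_map_cubeIndex S)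

theorem det_submatrix_nansonMatrix_eq_zero (hQ : ∀ i, (Q i).IsHomogeneous 2)
    (hS : ∀ k ∈ S, ∀ i, eval (Pi.single k 1) (Q i) = 0) {ι : Type*} [Fintype ι] [DecidableEq ι]
    (hι : 20 - S.card < Fintype.card ι) (r c : ι → Fin 20) :
    ((nansonMatrix Q).submatrix r c).det = 0 :=
  det_submatrix_eq_zero_of_columns_eq_zero (nansonMatrix_eq_zero_of_mem_map_cubeIndex hQ hS)
    ((card_compl_map_cubeIndex S).trans_lt hι) r c

end Nanson

section BinodalForm

variable {K : Type*} [CommRing K]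

/-- The cubic form in binodal normal form with coefficients `a`: the combination of the twelve
cubic monomials of degree at most one in `x₀` and at most one in `x₃`, in the order fixed by the
family `N₂ⁿᶠ`. -/
noncomputable def binodalForm (a : Fin 12 → K) : MvPolynomial (Fin 4) K :=
  C (a 0) * (X 0 * X 1 ^ 2) + C (a 1) * (X 0 * X 1 * X 2) +
    C (a 2) * (X 0 * X 1 * X 3) + C (a 3) * (X 0 * X 2 ^ 2) +
    C (a 4) * (X 0 * X 2 * X 3) + C (a 5) * (X 1 ^ 3) +
    C (a 6) * (X 1 ^ 2 * X 2) + C (a 7) * (X 1 * X 2 ^ 2) +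
    C (a 8) * (X 1 * X 2 * X 3) + C (a 9) * (X 1 ^ 2 * X 3) +
    C (a 10) * (X 2 ^ 3) + C (a 11) * (X 2 ^ 2 * X 3)

theorem isHomogeneous_binodalForm (a : Fin 12 → K) : (binodalForm a).IsHomogeneous 3 := by
  have hX (i : Fin 4) : (X i : MvPolynomial (Fin 4) K).IsHomogeneous 1 := isHomogeneous_X K i
  have cube (i : Fin 4) : (X i ^ 3 : MvPolynomial (Fin 4) K).IsHomogeneous 3 := (hX i).pow 3
  have sq_mul (i j : Fin 4) : (X i ^ 2 * X j : MvPolynomial (Fin 4) K).IsHomogeneous 3 :=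
    ((hX i).pow 2).mul (hX j)
  have mul_sq (i j : Fin 4) : (X i * X j ^ 2 : MvPolynomial (Fin 4) K).IsHomogeneous 3 :=
    (hX i).mul ((hX j).pow 2)
  have mul_mul (i j k : Fin 4) : (X i * X j * X k : MvPolynomial (Fin 4) K).IsHomogeneous 3 :=
    ((hX i).mul (hX j)).mul (hX k)
  unfold binodalForm
  iterate 11 refine IsHomogeneous.add ?_ ?_
  all_goals refine IsHomogeneous.C_mul ?_ _
  all_goals simp only [cube, sq_mul, mul_sq, mul_mul]

theorem eval_single_one_pderiv_binodalForm (a : Fin 12 → K) :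
    ∀ k ∈ ({0, 3} : Finset (Fin 4)), ∀ i,
      eval (Pi.single k 1) (pderiv i (binodalForm a)) = 0 := by
  simp only [Finset.mem_insert, Finset.mem_singleton]
  rintro k (rfl | rfl) i <;>
    simp [binodalForm, Derivation.leibniz, Derivation.leibniz_pow]

end BinodalForm

theorem binodal_normal_form_in_V2_general {K : Type*} [CommRing K] [Nontrivial K]
    (a : Fin 12 → K) :
    (∀ r c : Fin 19 → Fin 20,
        ((nansonMatrix fun i => pderiv i (binodalForm a)).submatrix r c).det = 0) ∧
      (nansonMatrix fun i => pderiv i (binodalForm a)).rank ≤ 18 := by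
  have quadrics : ∀ i, (pderiv i (binodalForm a)).IsHomogeneous 2 :=
    fun i => (isHomogeneous_binodalForm a).pderiv
  have nodes := eval_single_one_pderiv_binodalForm a
  exact ⟨det_submatrix_nansonMatrix_eq_zero quadrics nodes (by decide),
    rank_nansonMatrix_le quadrics nodes⟩

/-- For a cubic surface in binodal normal form (singular at `(1:0:0:0)` and `(0:0:0:1)`),
all 19 × 19 minors of the Nanson matrix of its partial derivatives vanish; equivalently
the Nanson matrix has rank at most 18.  That is, `N₂ⁿᶠ ⊆ V₂`. -/
theorem binodal_normal_form_in_V2 (a : Fin 12 → ℂ) (F : MvPolynomial (Fin 4) ℂ)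
    (hF : F = C (a 0) * (X 0 * X 1 ^ 2) + C (a 1) * (X 0 * X 1 * X 2) +
      C (a 2) * (X 0 * X 1 * X 3) + C (a 3) * (X 0 * X 2 ^ 2) +
      C (a 4) * (X 0 * X 2 * X 3) + C (a 5) * (X 1 ^ 3) +
      C (a 6) * (X 1 ^ 2 * X 2) + C (a 7) * (X 1 * X 2 ^ 2) +
      C (a 8) * (X 1 * X 2 * X 3) + C (a 9) * (X 1 ^ 2 * X 3) +
      C (a 10) * (X 2 ^ 3) + C (a 11) * (X 2 ^ 2 * X 3)) :
    (∀ r c : Fin 19 → Fin 20,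
        ((nansonMatrix fun i => pderiv i F).submatrix r c).det = 0) ∧
      (nansonMatrix fun i => pderiv i F).rank ≤ 18 := by
  subst hF
  exact binodal_normal_form_in_V2_general a
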